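/- arXiv:2202.06195 — 5 statements merged into one kernel-verified Lean document; each statement's English description precedes it below -/
import Mathlib

section
/- For every integer d ≥ 1 and every real y with 0 < y < π/4, the iterated sum over integers n₁ ≥ n₂ ≥ ⋯ ≥ n_d ≥ 0 of (4^{n₁} (sin y)^{2 n₁} / binom(2n₁, n₁)) / ((2n₁+1)(2n₂+1)⋯(2n_d+1)) equals (2 / sin(2y)) times the imaginary part of ∑_{n=1}^∞ (i · tan y)^n / n^d. -/
/-!
Expand `1 / (1 - x) ^ (m + 1)` into its binomial series and exchange the order of summation: for
`|x| < 1 / 2` the series `∑ (-1) ^ m x ^ m / ((1 - x) ^ (m + 1) (2 m + 1) ^ d)` becomes the power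
series in `x` whose coefficients are `∑ (-1) ^ m (n choose m) / (2 m + 1) ^ d`. By Dilcher's
identity each coefficient is `4 ^ n / (2 n choose n)` times a nested sum of `∏ 1 / (2 n_j + 1)` over
antitone tuples with head `n`. With `x = sin² y` one has `x / (1 - x) = tan² y`, and the original
series is `2 / sin (2 y)` times the inverse tangent integral of `tan y`, that is,
`Im Li_d (i tan y)`.
-/

open Real Complex

section AntitoneTuples

lemma antitone_cons_iff {α : Type*} [Preorder α] {d : ℕ} {a : α} {n : Fin d → α} :
    Antitone (Fin.cons a n : Fin (d + 1) → α) ↔ Antitone n ∧ ∀ j, n j ≤ a := by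
  refine ⟨fun h ↦ ⟨fun i j hij ↦ ?_, fun j ↦ ?_⟩, fun ⟨hn, ha⟩ i j hij ↦ ?_⟩
  · simpa using h (Fin.succ_le_succ_iff.2 hij)
  · simpa using h (Fin.zero_le j.succ)
  · cases j using Fin.cases with
    | zero => rw [Fin.le_zero_iff.1 hij]
    | succ j =>
      cases i using Fin.cases with
      | zero => simpa using ha j
      | succ i => simpa using hn (Fin.succ_le_succ_iff.1 hij)

/-- The finite set of tuples `N ≥ n₁ ≥ ⋯ ≥ n_d` of natural numbers. -/
def antitoneTuples (d N : ℕ) : Finset (Fin d → ℕ) :=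
  {n ∈ Fintype.piFinset fun _ ↦ Finset.range (N + 1) | Antitone n}

lemma mem_antitoneTuples {d N : ℕ} {n : Fin d → ℕ} :
    n ∈ antitoneTuples d N ↔ Antitone n ∧ ∀ j, n j ≤ N := by
  simp [antitoneTuples, and_comm]

lemma cons_mem_antitoneTuples {d N k : ℕ} {n : Fin d → ℕ} :
    (Fin.cons k n : Fin (d + 1) → ℕ) ∈ antitoneTuples (d + 1) N ↔
      k ≤ N ∧ n ∈ antitoneTuples d k := by
  simp only [mem_antitoneTuples, antitone_cons_iff, Fin.forall_fin_succ, Fin.cons_zero,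
    Fin.cons_succ]
  exact ⟨fun ⟨hn, hk, _⟩ ↦ ⟨hk, hn⟩, fun ⟨hk, hn⟩ ↦ ⟨hn, hk, fun j ↦ (hn.2 j).trans hk⟩⟩

/-- Splitting a nonempty antitone tuple into its head and its tail. -/
def antitoneConsEquiv (d : ℕ) :
    (Σ N, antitoneTuples d N) ≃ {n : Fin (d + 1) → ℕ // Antitone n} where
  toFun p := ⟨Fin.cons p.1 p.2.1, antitone_cons_iff.2 (mem_antitoneTuples.1 p.2.2)⟩
  invFun n := ⟨n.1 0, Fin.tail n.1, mem_antitoneTuples.2 <| antitone_cons_iff.1 <|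
    (Fin.cons_self_tail n.1).symm ▸ n.2⟩
  left_inv _ := rfl
  right_inv n := Subtype.ext (Fin.cons_self_tail n.1)

/-- The nested sum of `f n₁ ⋯ f n_d` over `N ≥ n₁ ≥ ⋯ ≥ n_d ≥ 0`, i.e. the complete homogeneous
symmetric polynomial of degree `d` in `f 0, …, f N`. -/
def nestedSum {R : Type*} [CommSemiring R] (f : ℕ → R) (d N : ℕ) : R :=
  ∑ n ∈ antitoneTuples d N, ∏ j, f (n j)

section CommSemiring

variable {R : Type*} [CommSemiring R] (f : ℕ → R)

@[simp]
lemma nestedSum_zero_left (N : ℕ) : nestedSum f 0 N = 1 := by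
  have h : antitoneTuples 0 N = Finset.univ :=
    Finset.eq_univ_of_forall fun _ ↦ mem_antitoneTuples.2 ⟨fun i ↦ i.elim0, fun j ↦ j.elim0⟩
  simp [nestedSum, h]

lemma nestedSum_succ_left (d N : ℕ) :
    nestedSum f (d + 1) N = ∑ k ∈ Finset.range (N + 1), f k * nestedSum f d k := by
  simp only [nestedSum, Finset.mul_sum]
  rw [Finset.sum_sigma', eq_comm]
  refine Finset.sum_bij' (fun p _ ↦ Fin.cons p.1 p.2) (fun n _ ↦ ⟨n 0, Fin.tail n⟩)
    (fun p hp ↦ ?_) (fun n hn ↦ ?_) (fun _ _ ↦ rfl) (fun n _ ↦ Fin.cons_self_tail n)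
    (fun p _ ↦ ?_)
  · simpa [cons_mem_antitoneTuples, Nat.lt_succ_iff] using hp
  · rw [← Fin.cons_self_tail n, cons_mem_antitoneTuples] at hn
    simpa [Nat.lt_succ_iff] using hn
  · simp [Fin.prod_univ_succ]

lemma nestedSum_succ_succ (d N : ℕ) :
    nestedSum f (d + 1) (N + 1) =
      nestedSum f (d + 1) N + f (N + 1) * nestedSum f d (N + 1) := by
  simp only [nestedSum_succ_left f d, Finset.sum_range_succ _ (N + 1)]

lemma nestedSum_zero_right (d : ℕ) : nestedSum f d 0 = f 0 ^ d := by
  induction d with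
  | zero => simp
  | succ d ih => simp [nestedSum_succ_left, ih, pow_succ']

end CommSemiring

lemma hasSum_antitone_of_hasSum_nestedSum {f g : ℕ → ℝ} {d : ℕ} {S : ℝ} (hf : ∀ k, 0 ≤ f k)
    (hS : HasSum (fun N ↦ g N * nestedSum f d N) S) :
    HasSum (fun n : {n : Fin (d + 1) → ℕ // Antitone n} ↦ g (n.1 0) * ∏ j : Fin d, f (n.1 j.succ))
      S := by
  rw [← (antitoneConsEquiv d).hasSum_iff]
  have hfiber (h : ℕ → ℝ) (N : ℕ) :
      HasSum (fun n : antitoneTuples d N ↦ h N * ∏ j, f (n.1 j)) (h N * nestedSum f d N) := by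
    rw [nestedSum, Finset.mul_sum, ← Finset.sum_coe_sort]
    exact hasSum_fintype _
  have habs : Summable fun p : Σ N, antitoneTuples d N ↦ |g p.1| * ∏ j, f (p.2.1 j) := by
    refine (summable_sigma_of_nonneg fun p ↦
      mul_nonneg (abs_nonneg _) (Finset.prod_nonneg fun j _ ↦ hf _)).2
      ⟨fun N ↦ (hfiber (fun N ↦ |g N|) N).summable, hS.summable.abs.congr fun N ↦ ?_⟩
    have hN : 0 ≤ nestedSum f d N := Finset.sum_nonneg fun n _ ↦ Finset.prod_nonneg fun j _ ↦ hf _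
    rw [(hfiber (fun N ↦ |g N|) N).tsum_eq, abs_mul, abs_of_nonneg hN]
  refine HasSum.sigma_of_hasSum hS (hfiber g) (habs.of_norm_bounded fun p ↦ ?_)
  change ‖g p.1 * ∏ j, f (p.2.1 j)‖ ≤ _
  rw [norm_mul, Real.norm_eq_abs, Real.norm_of_nonneg (Finset.prod_nonneg fun j _ ↦ hf _)]

end AntitoneTuples

section Dilcher

variable {K : Type*} [Field K]

/-- The alternating binomial sum `∑ (-1) ^ m (n choose m) / (b m + a) ^ d` evaluated by Dilcher's
identity. -/
def alternatingBinomialSum (a b : K) (d n : ℕ) : K :=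
  ∑ m ∈ Finset.range (n + 1), n.choose m * ((-1) ^ m / (b * m + a) ^ d)

variable {a b : K}

@[simp]
lemma alternatingBinomialSum_zero_right (d : ℕ) :
    alternatingBinomialSum a b d 0 = (a ^ d)⁻¹ := by
  simp [alternatingBinomialSum]

lemma alternatingBinomialSum_zero_succ (n : ℕ) : alternatingBinomialSum a b 0 (n + 1) = 0 := by
  have h := congrArg (Int.cast : ℤ → K) (Int.alternating_sum_range_choose_of_ne n.succ_ne_zero)
  simpa [alternatingBinomialSum, mul_comm] using h

lemma alternatingBinomialSum_succ_succ (hab : ∀ m : ℕ, b * m + a ≠ 0) (d n : ℕ) :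
    (b * (n + 1) + a) * alternatingBinomialSum a b (d + 1) (n + 1) =
      b * (n + 1) * alternatingBinomialSum a b (d + 1) n +
        alternatingBinomialSum a b d (n + 1) := by
  have hextend : alternatingBinomialSum a b (d + 1) n =
      ∑ m ∈ Finset.range (n + 1 + 1), n.choose m * ((-1) ^ m / (b * m + a) ^ (d + 1)) := by
    simp [alternatingBinomialSum, Finset.sum_range_succ _ (n + 1)]
  rw [hextend, alternatingBinomialSum, alternatingBinomialSum, Finset.mul_sum, Finset.mul_sum,
    ← Finset.sum_add_distrib]
  refine Finset.sum_congr rfl fun m hm ↦ ?_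
  have hchoose : (n.choose m * (n + 1) : K) = (n + 1).choose m * (n + 1 - m) := by
    have h := congrArg (Nat.cast : ℕ → K) (Nat.choose_mul_succ_eq n m)
    push_cast [Nat.cast_sub (Finset.mem_range_succ_iff.1 hm)] at h
    exact h
  have hm0 := hab m
  field_simp
  linear_combination (-b * (b * m + a) ^ d) * hchoose

lemma alternatingBinomialSum_one (hab : ∀ m : ℕ, b * m + a ≠ 0) (n : ℕ) :
    alternatingBinomialSum a b 1 n =
      b ^ n * n.factorial / ∏ k ∈ Finset.range (n + 1), (b * k + a) := by
  induction n with
  | zero => simp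
  | succ n ih =>
    have hrec := alternatingBinomialSum_succ_succ hab 0 n
    have hn : b * (n + 1) + a ≠ 0 := mod_cast hab (n + 1)
    have hprod : ∏ k ∈ Finset.range (n + 1), (b * k + a) ≠ 0 :=
      Finset.prod_ne_zero_iff.2 fun k _ ↦ hab k
    rw [zero_add, alternatingBinomialSum_zero_succ, add_zero, ih] at hrec
    refine mul_left_cancel₀ hn (hrec.trans ?_)
    rw [Finset.prod_range_succ _ (n + 1), Nat.factorial_succ]
    push_cast
    field_simp
    ring

theorem alternatingBinomialSum_succ_eq_mul_nestedSum (hab : ∀ m : ℕ, b * m + a ≠ 0) (d n : ℕ) :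
    alternatingBinomialSum a b (d + 1) n =
      alternatingBinomialSum a b 1 n * nestedSum (fun k ↦ (b * k + a)⁻¹) d n := by
  induction d generalizing n with
  | zero => simp
  | succ d ihd =>
    induction n with
    | zero => simp [nestedSum_zero_right, pow_succ' _ (d + 1), mul_comm]
    | succ n ihn =>
      have hn : b * (n + 1) + a ≠ 0 := mod_cast hab (n + 1)
      have hrec := alternatingBinomialSum_succ_succ hab (d + 1) n
      have hrec₁ := alternatingBinomialSum_succ_succ hab 0 n
      rw [alternatingBinomialSum_zero_succ, zero_add] at hrec₁
      rw [ihn, ihd] at hrec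
      refine mul_left_cancel₀ hn (hrec.trans ?_)
      rw [nestedSum_succ_succ]
      generalize nestedSum (R := K) _ (d + 1) n = h
      push_cast
      field_simp
      linear_combination (-h) * hrec₁

end Dilcher

section CentralBinom

lemma two_pow_mul_factorial_mul_centralBinom (n : ℕ) :
    2 ^ n * n.factorial * n.centralBinom = 4 ^ n * ∏ k ∈ Finset.range n, (2 * k + 1) := by
  induction n with
  | zero => simp
  | succ n ih =>
    rw [Finset.prod_range_succ, Nat.factorial_succ]
    calc 2 ^ (n + 1) * ((n + 1) * n.factorial) * (n + 1).centralBinom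
        = 2 ^ (n + 1) * n.factorial * ((n + 1) * (n + 1).centralBinom) := by ring
      _ = 4 * (2 * n + 1) * (2 ^ n * n.factorial * n.centralBinom) := by
        rw [Nat.succ_mul_centralBinom_succ]; ring
      _ = 4 ^ (n + 1) * ((∏ k ∈ Finset.range n, (2 * k + 1)) * (2 * n + 1)) := by rw [ih]; ring

lemma two_pow_mul_factorial_div_prod {K : Type*} [Field K] [CharZero K] (n : ℕ) :
    (2 ^ n * n.factorial / ∏ k ∈ Finset.range (n + 1), (2 * (k : K) + 1) : K) =
      4 ^ n / n.centralBinom * (2 * (n : K) + 1)⁻¹ := by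
  have hodd (k : ℕ) : (2 * k + 1 : K) ≠ 0 := mod_cast (2 * k).succ_ne_zero
  have hprod : ∏ k ∈ Finset.range n, (2 * (k : K) + 1) ≠ 0 :=
    Finset.prod_ne_zero_iff.2 fun k _ ↦ hodd k
  have hbinom : (n.centralBinom : K) ≠ 0 := mod_cast n.centralBinom_ne_zero
  have h := congrArg (Nat.cast : ℕ → K) (two_pow_mul_factorial_mul_centralBinom n)
  push_cast at h
  have hn := hodd n
  rw [Finset.prod_range_succ]
  field_simp
  linear_combination h

end CentralBinom

section EulerTransform

lemma summable_choose_mul_pow_mul_pow {r s : ℝ} (hr : 0 ≤ r) (hs : 0 ≤ s) (hrs : r + s < 1) :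
    Summable fun p : ℕ × ℕ ↦ (p.2 + p.1).choose p.1 * (r ^ p.1 * s ^ p.2) := by
  rw [← Finset.HasAntidiagonal.sigmaAntidiagonalEquivProd.summable_iff,
    summable_sigma_of_nonneg fun p ↦ by dsimp; positivity]
  refine ⟨fun _ ↦ (hasSum_fintype _).summable,
    (summable_geometric_of_lt_one (add_nonneg hr hs) hrs).congr fun n ↦ ?_⟩
  rw [(Commute.all r s).add_pow', tsum_fintype, ← Finset.sum_coe_sort]
  refine Finset.sum_congr rfl fun p _ ↦ ?_
  have hp : p.1.2 + p.1.1 = n :=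
    (add_comm _ _).trans (Finset.HasAntidiagonal.mem_antidiagonal.1 p.2)
  simp [hp]

theorem hasSum_pow_mul_sum_choose {𝕜 : Type*} [NormedField 𝕜] [CompleteSpace 𝕜] {c : ℕ → 𝕜}
    {C : ℝ} {x S : 𝕜} (hc : ∀ m, ‖c m‖ ≤ C) (hx : ‖x‖ < 1 / 2)
    (hS : HasSum (fun m ↦ c m * (x ^ m / (1 - x) ^ (m + 1))) S) :
    HasSum (fun n ↦ x ^ n * ∑ m ∈ Finset.range (n + 1), n.choose m * c m) S := by
  let F : ℕ × ℕ → 𝕜 := fun p ↦ c p.1 * (x ^ p.1 * ((p.2 + p.1).choose p.1 * x ^ p.2))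
  have hF : Summable F := by
    refine ((summable_choose_mul_pow_mul_pow (norm_nonneg x) (norm_nonneg x)
      (by linarith)).mul_left C).of_norm_bounded fun p ↦ ?_
    have hchoose : ‖((p.2 + p.1).choose p.1 : 𝕜)‖ ≤ (p.2 + p.1).choose p.1 := by
      simpa using Nat.norm_cast_le (α := 𝕜) ((p.2 + p.1).choose p.1)
    simp only [F, norm_mul, norm_pow]
    rw [mul_left_comm (‖x‖ ^ p.1)]
    have hC : 0 ≤ C := (norm_nonneg _).trans (hc 0)
    gcongr
    exact hc _
  have hrows (m : ℕ) : HasSum (fun j ↦ F (m, j)) (c m * (x ^ m / (1 - x) ^ (m + 1))) := by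
    have h := hasSum_choose_mul_geometric_of_norm_lt_one m (hx.trans one_half_lt_one)
    rw [div_eq_mul_one_div]
    exact (h.mul_left _).mul_left _
  rw [hS.unique (hF.hasSum.prod_fiberwise hrows)]
  refine (Finset.HasAntidiagonal.sigmaAntidiagonalEquivProd.hasSum_iff.2 hF.hasSum).sigma
    fun n ↦ ?_
  have hdiag : x ^ n * ∑ m ∈ Finset.range (n + 1), n.choose m * c m =
      ∑ p : Finset.HasAntidiagonal.antidiagonal n, F p := by
    rw [Finset.sum_coe_sort (Finset.HasAntidiagonal.antidiagonal n) F,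
      Finset.Nat.sum_antidiagonal_eq_sum_range_succ_mk, Finset.mul_sum]
    refine Finset.sum_congr rfl fun m hm ↦ ?_
    have hmn := Finset.mem_range_succ_iff.1 hm
    simp only [F]
    rw [Nat.sub_add_cancel hmn, ← pow_mul_pow_sub x hmn]
    ring
  rw [hdiag]
  exact hasSum_fintype _

end EulerTransform

section InverseTangentIntegral

lemma im_I_mul_ofReal_pow_two_mul (t : ℝ) (m : ℕ) : ((I * t) ^ (2 * m)).im = 0 := by
  rw [pow_mul, mul_pow, I_sq, neg_one_mul]
  norm_cast

lemma im_I_mul_ofReal_pow_two_mul_add_one (t : ℝ) (m : ℕ) :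
    ((I * t) ^ (2 * m + 1)).im = (-1) ^ m * t ^ (2 * m + 1) := by
  have h : (I * t) ^ (2 * m + 1) = (((-1) ^ m * t ^ (2 * m + 1) : ℝ) : ℂ) * I := by
    push_cast
    rw [mul_pow, pow_succ I, pow_mul, I_sq]
    ring
  simp [h, -ofReal_mul]

lemma summable_polylog {z : ℂ} (hz : ‖z‖ < 1) (d : ℕ) :
    Summable fun n : ℕ ↦ z ^ (n + 1) / ((n : ℂ) + 1) ^ d := by
  refine Summable.of_norm_bounded
    ((summable_nat_add_iff 1).2 (summable_geometric_of_lt_one (norm_nonneg z) hz)) fun n ↦ ?_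
  rw [norm_div, norm_pow, norm_pow]
  refine div_le_self (by positivity) (one_le_pow₀ ?_)
  exact_mod_cast (Complex.norm_natCast (n + 1)).symm ▸ Nat.one_le_cast.2 n.succ_pos

lemma hasSum_im_polylog_I_mul {t : ℝ} (ht : |t| < 1) (d : ℕ) :
    HasSum (fun m : ℕ ↦ (-1) ^ m * t ^ (2 * m + 1) / (2 * m + 1 : ℝ) ^ d)
      (∑' n : ℕ, (I * t) ^ (n + 1) / ((n : ℂ) + 1) ^ d).im := by
  have him (n : ℕ) : ((I * t) ^ (n + 1) / ((n : ℂ) + 1) ^ d).im =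
      ((I * t) ^ (n + 1)).im / ((n : ℝ) + 1) ^ d := by
    rw [← div_ofReal_im]
    push_cast
    rfl
  have hsum := hasSum_im (summable_polylog (z := I * t) (by simpa using ht) d).hasSum
  simp only [him] at hsum
  have hinj : Function.Injective fun m : ℕ ↦ 2 * m := mul_right_injective₀ two_ne_zero
  rw [← hinj.hasSum_iff fun n hn ↦ ?_] at hsum
  · simpa [Function.comp_def, im_I_mul_ofReal_pow_two_mul_add_one] using hsum
  · obtain ⟨k, rfl⟩ : Odd n := by
      rw [← Nat.not_even_iff_odd, even_iff_exists_two_mul]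
      exact fun ⟨k, hk⟩ ↦ hn ⟨k, hk.symm⟩
    rw [show 2 * k + 1 + 1 = 2 * (k + 1) by ring, im_I_mul_ofReal_pow_two_mul, zero_div]

end InverseTangentIntegral

theorem hasSum_antitone_four_pow_div_centralBinom {d : ℕ} {x S : ℝ} (hx : |x| < 1 / 2)
    (hS : HasSum (fun m : ℕ ↦ (-1) ^ m / (2 * m + 1 : ℝ) ^ (d + 1) * (x ^ m / (1 - x) ^ (m + 1)))
      S) :
    HasSum (fun n : {n : Fin (d + 1) → ℕ // Antitone n} ↦
      4 ^ n.1 0 * x ^ n.1 0 / (n.1 0).centralBinom / ∏ j, (2 * (n.1 j : ℝ) + 1)) S := by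
  have hodd (m : ℕ) : (2 * m + 1 : ℝ) ≠ 0 := by positivity
  have hcoeff : ∀ m : ℕ, ‖(-1) ^ m / (2 * m + 1 : ℝ) ^ (d + 1)‖ ≤ 1 := fun m ↦ by
    rw [norm_div, norm_pow, norm_neg, norm_one, one_pow, Real.norm_of_nonneg (by positivity)]
    exact div_le_self zero_le_one (one_le_pow₀ (by norm_num))
  have hpower : HasSum (fun N : ℕ ↦ x ^ N * (4 ^ N / N.centralBinom * (2 * N + 1 : ℝ)⁻¹) *
      nestedSum (fun k ↦ (2 * k + 1 : ℝ)⁻¹) d N) S := by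
    refine (hasSum_pow_mul_sum_choose hcoeff hx hS).congr_fun fun N ↦ ?_
    rw [← two_pow_mul_factorial_div_prod (K := ℝ), ← alternatingBinomialSum_one hodd, mul_assoc,
      ← alternatingBinomialSum_succ_eq_mul_nestedSum hodd, alternatingBinomialSum]
  refine (hasSum_antitone_of_hasSum_nestedSum (fun k ↦ by positivity) hpower).congr_fun fun n ↦ ?_
  rw [Fin.prod_univ_succ, Finset.prod_inv_distrib]
  field_simp

theorem stmt0_general (d : ℕ) (hd : 1 ≤ d) (y : ℝ) (hsin : Real.sin (2 * y) ≠ 0)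
    (hcos : 0 < Real.cos (2 * y)) :
    HasSum (fun n : {n : Fin d → ℕ // Antitone n} ↦
      ((4 : ℝ) ^ (n.1 ⟨0, hd⟩) * Real.sin y ^ (2 * n.1 ⟨0, hd⟩) /
        (Nat.choose (2 * n.1 ⟨0, hd⟩) (n.1 ⟨0, hd⟩) : ℝ)) /
      ∏ j : Fin d, (2 * (n.1 j : ℝ) + 1))
    ((2 / Real.sin (2 * y)) *
      (∑' n : ℕ, (Complex.I * (Real.tan y : ℂ)) ^ (n + 1) / ((n : ℂ) + 1) ^ d).im) := by
  obtain ⟨d, rfl⟩ := Nat.exists_eq_add_of_le' hd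
  obtain ⟨hs, hc⟩ : Real.sin y ≠ 0 ∧ Real.cos y ≠ 0 := by simpa [Real.sin_two_mul] using hsin
  have hsq : Real.sin y ^ 2 < 1 / 2 := by
    rw [Real.cos_two_mul, Real.cos_sq'] at hcos
    linarith
  have htan : |Real.tan y| < 1 := by
    rw [← sq_lt_one_iff_abs_lt_one, Real.tan_eq_sin_div_cos, div_pow, div_lt_one (by positivity),
      Real.cos_sq']
    linarith
  simp only [pow_mul, ← Nat.centralBinom_eq_two_mul_choose]
  refine hasSum_antitone_four_pow_div_centralBinom (by rwa [abs_sq]) ?_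
  refine ((hasSum_im_polylog_I_mul htan (d + 1)).mul_left _).congr_fun fun m ↦ ?_
  rw [← Real.cos_sq', Real.sin_two_mul, Real.tan_eq_sin_div_cos, div_pow]
  field_simp
  ring

/-- Proposition `pro-gtIds` (first identity), specialized form:
for `d ≥ 1` and `0 < y < π/4`, the iterated sum over `n₁ ≥ ⋯ ≥ n_d ≥ 0` of
`4^{n₁} (sin y)^{2n₁} / (binom(2n₁,n₁) (2n₁+1)⋯(2n_d+1))`
equals `(2/sin(2y)) · Im Li_d(i tan y)`. -/
theorem stmt0 (d : ℕ) (hd : 1 ≤ d) (y : ℝ) (hy0 : 0 < y) (hy : y < π / 4) :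
    (∑' n : {n : Fin d → ℕ // Antitone n},
      ((4 : ℝ) ^ (n.1 ⟨0, hd⟩) * Real.sin y ^ (2 * n.1 ⟨0, hd⟩) /
        (Nat.choose (2 * n.1 ⟨0, hd⟩) (n.1 ⟨0, hd⟩) : ℝ)) /
      ∏ j : Fin d, (2 * (n.1 j : ℝ) + 1)) =
    (2 / Real.sin (2 * y)) *
      (∑' n : ℕ, (Complex.I * (Real.tan y : ℂ)) ^ (n + 1) / ((n : ℂ) + 1) ^ d).im :=
  (stmt0_general d hd y (Real.sin_pos_of_pos_of_lt_pi (by linarith) (by linarith)).ne'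
    (Real.cos_pos_of_mem_Ioo ⟨by linarith, by linarith⟩)).tsum_eq
end

section
/- For every integer d ≥ 1 and every real y with 0 < y < π/4, we have (1/(d−1)!) ∫_0^y (log(tan y · cot t))^{d−1} dt = Im(∑_{n=1}^∞ (i · tan y)^n / n^d). -/
open Real Complex

/-
The substitution `t = arctan (a e⁻ᵘ)` with `a = tan y` turns `log (a cot t)` into `u` and `dt` into
`-K(u) du`, where `K(u) = a e⁻ᵘ / (1 + (a e⁻ᵘ)²)` is the imaginary part of the geometric series
`∑ (i a e⁻ᵘ)ⁿ⁺¹`. Integrating `uˢ⁻¹` against `K` term by term gives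
`Γ(s) ∑ Im (i a)ⁿ⁺¹ / (n + 1)ˢ = Γ(s) Im Liₛ(i a)`.
-/

open MeasureTheory Set

section ChangeOfVariables

theorem cot_neg (t : ℝ) : Real.cot (-t) = -Real.cot t := by
  simp only [Real.cot_eq_cos_div_sin, Real.cos_neg, Real.sin_neg, div_neg]

theorem strictAnti_arctan_mul_exp_neg {a : ℝ} (ha : 0 < a) :
    StrictAnti fun u ↦ Real.arctan (a * Real.exp (-u)) := fun _ _ h ↦
  arctan_strictMono <| mul_lt_mul_of_pos_left (Real.exp_lt_exp.2 (neg_lt_neg h)) ha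

theorem image_arctan_mul_exp_neg_Ioi {a : ℝ} (ha : 0 < a) :
    (fun u ↦ Real.arctan (a * Real.exp (-u))) '' Ioi 0 = Ioo 0 (Real.arctan a) := by
  ext t
  constructor
  · rintro ⟨u, hu, rfl⟩
    exact ⟨arctan_pos.2 (by positivity), by simpa using strictAnti_arctan_mul_exp_neg ha hu⟩
  · rintro ⟨ht_pos, ht_lt⟩
    have ht : t < π / 2 := ht_lt.trans (arctan_lt_pi_div_two a)
    have htan : 0 < Real.tan t := Real.tan_pos_of_pos_of_lt_pi_div_two ht_pos ht
    have harctan : Real.arctan (Real.tan t) = t := Real.arctan_tan (by linarith [pi_pos]) ht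
    have hlt : Real.tan t < a := by rwa [← arctan_lt_arctan_iff, harctan]
    refine ⟨Real.log (a / Real.tan t), Real.log_pos ((one_lt_div htan).2 hlt), ?_⟩
    simp only [Real.exp_neg, Real.exp_log (div_pos ha htan), inv_div, mul_div_cancel₀ _ ha.ne',
      harctan]

theorem hasDerivAt_arctan_mul_exp_neg (a u : ℝ) :
    HasDerivAt (fun u ↦ Real.arctan (a * Real.exp (-u)))
      (-(a * Real.exp (-u) / (1 + (a * Real.exp (-u)) ^ 2))) u := by
  convert ((hasDerivAt_neg u).exp.const_mul a).arctan using 1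
  ring

theorem log_mul_cot_arctan_mul_exp_neg {a : ℝ} (ha : a ≠ 0) (u : ℝ) :
    Real.log (a * Real.cot (Real.arctan (a * Real.exp (-u)))) = u := by
  rw [← Real.tan_inv_eq_cot, Real.tan_arctan, mul_inv, mul_inv_cancel_left₀ ha, ← Real.exp_neg,
    neg_neg, Real.log_exp]

variable {E : Type*} [NormedAddCommGroup E] [NormedSpace ℝ E]

theorem integral_comp_log_mul_cot_of_pos {a : ℝ} (ha : 0 < a) (g : ℝ → E) :
    ∫ t in (0 : ℝ)..Real.arctan a, g (Real.log (a * Real.cot t)) =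
      ∫ u in Ioi 0, (a * Real.exp (-u) / (1 + (a * Real.exp (-u)) ^ 2)) • g u := by
  rw [intervalIntegral.integral_of_le (arctan_pos.2 ha).le, integral_Ioc_eq_integral_Ioo,
    ← image_arctan_mul_exp_neg_Ioi ha,
    integral_image_eq_integral_deriv_smul_of_antitoneOn measurableSet_Ioi
      (fun u _ ↦ (hasDerivAt_arctan_mul_exp_neg a u).hasDerivWithinAt)
      ((strictAnti_arctan_mul_exp_neg ha).antitone.antitoneOn _)]
  simp only [neg_neg, log_mul_cot_arctan_mul_exp_neg ha.ne']

theorem integral_comp_log_mul_cot (a : ℝ) (g : ℝ → E) :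
    ∫ t in (0 : ℝ)..Real.arctan a, g (Real.log (a * Real.cot t)) =
      ∫ u in Ioi 0, (a * Real.exp (-u) / (1 + (a * Real.exp (-u)) ^ 2)) • g u := by
  rcases lt_trichotomy a 0 with ha | rfl | ha
  · have hneg := integral_comp_log_mul_cot_of_pos (neg_pos.2 ha) g
    have hodd : ∫ t in (0 : ℝ)..Real.arctan (-a), g (Real.log (-a * Real.cot t)) =
        -∫ t in (0 : ℝ)..Real.arctan a, g (Real.log (a * Real.cot t)) := by
      rw [← intervalIntegral.integral_symm, Real.arctan_neg, ← neg_zero,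
        ← intervalIntegral.integral_comp_neg]
      simp only [cot_neg, mul_neg, neg_mul, neg_neg, neg_zero]
    rw [← neg_inj, ← hodd, hneg, ← integral_neg]
    simp only [neg_mul, neg_sq, neg_div, neg_smul]
  · simp
  · exact integral_comp_log_mul_cot_of_pos ha g

end ChangeOfVariables

theorem hasSum_Gamma_mul_div_rpow {ι : Type*} [Countable ι] {a p : ι → ℝ} {F : ℝ → ℝ} {s : ℝ}
    (hp : ∀ i, 0 < p i) (hs : 0 < s)
    (hF : ∀ t ∈ Ioi 0, HasSum (fun i ↦ a i * Real.exp (-p i * t)) (F t))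
    (h_sum : Summable fun i ↦ |a i| / p i ^ s) :
    HasSum (fun i ↦ Real.Gamma s * a i / p i ^ s) (∫ t in Ioi 0, t ^ (s - 1) * F t) := by
  have hmellin : mellin (fun t ↦ (F t : ℂ)) s = ↑(∫ t in Ioi 0, t ^ (s - 1) * F t) := by
    rw [mellin, ← integral_complex_ofReal]
    refine setIntegral_congr_fun measurableSet_Ioi fun t ht ↦ ?_
    simp [ofReal_cpow (mem_Ioi.1 ht).le]
  have hsum := hasSum_mellin (a := fun i ↦ (a i : ℂ)) (p := p) (F := fun t ↦ (F t : ℂ))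
    (s := (s : ℂ)) (fun i ↦ .inr (hp i)) (by simpa using hs)
    (fun t ht ↦ by exact_mod_cast hF t ht) (by simpa using h_sum)
  rw [hmellin] at hsum
  rw [← Complex.hasSum_ofReal]
  convert hsum using 2 with i
  simp [Complex.Gamma_ofReal, ofReal_cpow (hp i).le]

theorem norm_I_mul_ofReal (x : ℝ) : ‖I * (x : ℂ)‖ = |x| := by
  rw [norm_mul, norm_I, one_mul, norm_real, Real.norm_eq_abs]

theorem hasSum_im_I_mul_pow_succ {x : ℝ} (hx : |x| < 1) :
    HasSum (fun n : ℕ ↦ ((I * (x : ℂ)) ^ (n + 1)).im) (x / (1 + x ^ 2)) := by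
  have hnorm : ‖I * (x : ℂ)‖ < 1 := (norm_I_mul_ofReal x).trans_lt hx
  have hsum := hasSum_im ((hasSum_geometric_of_norm_lt_one hnorm).mul_left (I * (x : ℂ)))
  have him : (I * (x : ℂ) * (1 - I * (x : ℂ))⁻¹).im = x / (1 + x ^ 2) := by
    simp [Complex.inv_re, Complex.normSq_apply, ← sq, div_eq_mul_inv]
  simpa only [pow_succ', him] using hsum

theorem hasSum_im_I_mul_pow_succ_mul_exp_neg {a u : ℝ} (ha : |a| ≤ 1) (hu : 0 < u) :
    HasSum (fun n : ℕ ↦ ((I * (a : ℂ)) ^ (n + 1)).im * Real.exp (-((n : ℝ) + 1) * u))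
      (a * Real.exp (-u) / (1 + (a * Real.exp (-u)) ^ 2)) := by
  have hlt : |a * Real.exp (-u)| < 1 := by
    rw [abs_mul, Real.abs_exp]
    exact mul_lt_one_of_nonneg_of_lt_one_right ha (Real.exp_pos _).le
      (Real.exp_lt_one_iff.2 (neg_lt_zero.2 hu))
  convert hasSum_im_I_mul_pow_succ hlt using 2 with n
  have hexp : Real.exp (-((n : ℝ) + 1) * u) = Real.exp (-u) ^ (n + 1) := by
    rw [← Real.exp_nat_mul]
    push_cast
    ring_nf
  rw [hexp, ofReal_mul, ← mul_assoc, mul_pow _ (Real.exp (-u) : ℂ), ← ofReal_pow, im_mul_ofReal]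

theorem ofReal_natCast_add_one_rpow (n : ℕ) (s : ℝ) :
    ((((n : ℝ) + 1) ^ s : ℝ) : ℂ) = ((n : ℂ) + 1) ^ (s : ℂ) := by
  rw [ofReal_cpow (by positivity)]
  push_cast
  rfl

theorem norm_natCast_add_one_cpow (n : ℕ) (s : ℂ) :
    ‖((n : ℂ) + 1) ^ s‖ = ((n : ℝ) + 1) ^ s.re := by
  exact_mod_cast norm_natCast_cpow_of_pos n.succ_pos s

theorem summable_pow_succ_div_cpow {z s : ℂ} (hz : ‖z‖ < 1) (hs : 0 ≤ s.re) :
    Summable fun n : ℕ ↦ z ^ (n + 1) / ((n : ℂ) + 1) ^ s := by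
  refine Summable.of_norm_bounded
    ((summable_nat_add_iff 1).2 (summable_geometric_of_lt_one (norm_nonneg z) hz)) fun n ↦ ?_
  rw [norm_div, norm_pow, norm_natCast_add_one_cpow]
  exact div_le_self (by positivity) (Real.one_le_rpow (by linarith [n.cast_nonneg (α := ℝ)]) hs)

theorem hasSum_Gamma_mul_im_I_mul_pow_succ_div_rpow {a s : ℝ} (ha : |a| ≤ 1) (hs : 0 < s)
    (hsum : Summable fun n : ℕ ↦ (I * (a : ℂ)) ^ (n + 1) / ((n : ℂ) + 1) ^ (s : ℂ)) :
    HasSum (fun n : ℕ ↦ Real.Gamma s * ((I * (a : ℂ)) ^ (n + 1)).im / ((n : ℝ) + 1) ^ s)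
      (∫ u in Ioi 0, u ^ (s - 1) * (a * Real.exp (-u) / (1 + (a * Real.exp (-u)) ^ 2))) := by
  refine hasSum_Gamma_mul_div_rpow (fun n ↦ by positivity) hs
    (fun u hu ↦ hasSum_im_I_mul_pow_succ_mul_exp_neg ha hu)
    (.of_nonneg_of_le (fun n ↦ by positivity) (fun n ↦ ?_) hsum.norm)
  rw [norm_div, norm_natCast_add_one_cpow, ofReal_re]
  gcongr
  exact abs_im_le_norm _

theorem integral_rpow_mul_eq_Gamma_mul_im_polylog {a s : ℝ} (ha : |a| ≤ 1) (hs : 0 < s)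
    (hsum : Summable fun n : ℕ ↦ (I * (a : ℂ)) ^ (n + 1) / ((n : ℂ) + 1) ^ (s : ℂ)) :
    ∫ u in Ioi 0, u ^ (s - 1) * (a * Real.exp (-u) / (1 + (a * Real.exp (-u)) ^ 2)) =
      Real.Gamma s * (∑' n : ℕ, (I * (a : ℂ)) ^ (n + 1) / ((n : ℂ) + 1) ^ (s : ℂ)).im := by
  rw [← (hasSum_Gamma_mul_im_I_mul_pow_succ_div_rpow ha hs hsum).tsum_eq, im_tsum hsum,
    ← tsum_mul_left]
  simp only [← ofReal_natCast_add_one_rpow, div_ofReal_im, mul_div_assoc]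

theorem abs_tan_lt_one {y : ℝ} (hy : |y| < π / 4) : |Real.tan y| < 1 := by
  obtain ⟨hl, hr⟩ := abs_lt.1 hy
  rw [abs_lt, ← Real.tan_pi_div_four, ← Real.tan_neg]
  exact ⟨Real.tan_lt_tan_of_lt_of_lt_pi_div_two (by linarith [pi_pos]) (by linarith) hl,
    Real.tan_lt_tan_of_lt_of_lt_pi_div_two (by linarith) (by linarith [pi_pos]) hr⟩

theorem abs_tan_le_one {y : ℝ} (hy : |y| ≤ π / 4) : |Real.tan y| ≤ 1 := by
  rcases hy.lt_or_eq with hlt | heq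
  · exact (abs_tan_lt_one hlt).le
  · rcases eq_or_eq_neg_of_abs_eq heq with rfl | rfl <;>
      simp only [Real.tan_neg, Real.tan_pi_div_four, abs_neg, abs_one, le_refl]

theorem summable_I_mul_tan_pow_succ_div_cpow {y : ℝ} {s : ℂ} (hy : |y| < π / 4) (hs : 0 ≤ s.re) :
    Summable fun n : ℕ ↦ (I * (Real.tan y : ℂ)) ^ (n + 1) / ((n : ℂ) + 1) ^ s :=
  summable_pow_succ_div_cpow ((norm_I_mul_ofReal _).trans_lt (abs_tan_lt_one hy)) hs

theorem Gamma_natCast_eq_factorial_pred {d : ℕ} (hd : 1 ≤ d) :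
    Real.Gamma d = ((d - 1).factorial : ℝ) := by
  rw [← Real.Gamma_nat_eq_factorial, Nat.cast_pred hd, sub_add_cancel]

theorem stmt5_general {s : ℝ} (hs : 0 < s) {y : ℝ} (hy : |y| ≤ π / 4)
    (hsum : Summable fun n : ℕ ↦
      (Complex.I * (Real.tan y : ℂ)) ^ (n + 1) / ((n : ℂ) + 1) ^ (s : ℂ)) :
    (1 / Real.Gamma s) *
      ∫ t in (0 : ℝ)..y, (Real.log (Real.tan y * Real.cot t)) ^ (s - 1) =
    (∑' n : ℕ, (Complex.I * (Real.tan y : ℂ)) ^ (n + 1) / ((n : ℂ) + 1) ^ (s : ℂ)).im := by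
  have harctan : Real.arctan (Real.tan y) = y := by
    obtain ⟨hl, hr⟩ := abs_le.1 hy
    exact Real.arctan_tan (by linarith [pi_pos]) (by linarith [pi_pos])
  have hcov := integral_comp_log_mul_cot (Real.tan y) (· ^ (s - 1))
  simp only [harctan, smul_eq_mul, mul_comm _ (_ ^ (s - 1))] at hcov
  rw [hcov, integral_rpow_mul_eq_Gamma_mul_im_polylog (abs_tan_le_one hy) hs hsum, one_div,
    inv_mul_cancel_left₀ (Real.Gamma_pos_of_pos hs).ne']

/-- For `d ≥ 1` and `0 < y < π/4`,
`(1/(d−1)!) ∫_0^y (log(tan y · cot t))^{d−1} dt = Im Li_d(i tan y)`. -/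
theorem stmt5 (d : ℕ) (hd : 1 ≤ d) (y : ℝ) (hy0 : 0 < y) (hy : y < π / 4) :
    (1 / ((d - 1).factorial : ℝ)) *
      ∫ t in (0 : ℝ)..y, (Real.log (Real.tan y * Real.cot t)) ^ (d - 1) =
    (∑' n : ℕ, (Complex.I * (Real.tan y : ℂ)) ^ (n + 1) / ((n : ℂ) + 1) ^ d).im := by
  have hy' : |y| < π / 4 := by rwa [abs_of_pos hy0]
  simpa [Gamma_natCast_eq_factorial_pred hd, ← Nat.cast_pred hd] using
    stmt5_general (Nat.cast_pos.2 hd) hy'.le (summable_I_mul_tan_pow_succ_div_cpow hy' (by simp))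
end

section
/- For every natural number n and every real y with −π/2 < y < π/2, we have ∑_{m ≥ n} 4^m (sin y)^{2m+1} / (binom(2m, m) · (2m+1)) = (4^n / (binom(2n, n) · cos y)) · ∫_0^y (sin t)^{2n} dt. -/
open Real

/-!
Write `T m = 4 ^ m / (centralBinom m * cos y) * ∫ t in 0..y, sin t ^ (2 * m)`. By the reduction
formula for `∫ sin ^ (2 * m + 2)` and the recursion for central binomial coefficients, the `m`-th
term of the series is `T m - T (m + 1)`. Since `4 ^ m / centralBinom m` grows at most linearly and
`|sin t| ≤ |sin y| < 1` on the interval of integration, `T` is summable, so the series telescopes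
to `T n`.
-/

theorem hasSum_sub_succ {G : Type*} [AddCommGroup G] [TopologicalSpace G] [IsTopologicalAddGroup G]
    {f : ℕ → G} (hf : Summable f) : HasSum (fun k ↦ f k - f (k + 1)) (f 0) := by
  obtain ⟨a, ha⟩ := hf
  have hshift : HasSum (fun k ↦ f (k + 1)) (a - f 0) := by
    simpa using (hasSum_nat_add_iff' 1).2 ha
  simpa using ha.sub hshift

theorem four_pow_div_centralBinom_succ {K : Type*} [Field K] [CharZero K] (m : ℕ) :
    (4 : K) ^ (m + 1) / (m + 1).centralBinom =
      (2 * m + 2) / (2 * m + 1) * (4 ^ m / m.centralBinom) := by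
  have hrec : ((m : K) + 1) * (m + 1).centralBinom = 2 * (2 * m + 1) * m.centralBinom := by
    exact_mod_cast m.succ_mul_centralBinom_succ
  have hm : (2 * m + 1 : K) ≠ 0 := by exact_mod_cast (2 * m).succ_ne_zero
  have hcm : (m.centralBinom : K) ≠ 0 := by exact_mod_cast m.centralBinom_ne_zero
  have hcm' : ((m + 1).centralBinom : K) ≠ 0 := by exact_mod_cast (m + 1).centralBinom_ne_zero
  rw [div_mul_div_comm, div_eq_div_iff hcm' (mul_ne_zero hm hcm)]
  linear_combination -2 * 4 ^ m * hrec

theorem four_pow_div_centralBinom_le {K : Type*} [Field K] [LinearOrder K] [IsStrictOrderedRing K]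
    (m : ℕ) : (4 : K) ^ m / m.centralBinom ≤ 2 * m + 1 := by
  rw [div_le_iff₀ (by exact_mod_cast m.centralBinom_pos)]
  exact_mod_cast m.four_pow_le_two_mul_add_one_mul_central_binom

theorem abs_sin_le_abs_sin {t y : ℝ} (hty : |t| ≤ |y|) (hy : |y| ≤ π / 2) : |sin t| ≤ |sin y| := by
  have hyπ : |y| ≤ π := by linarith [pi_pos]
  rw [abs_sin_eq_sin_abs_of_abs_le_pi (hty.trans hyπ), abs_sin_eq_sin_abs_of_abs_le_pi hyπ]
  exact sin_le_sin_of_le_of_le_pi_div_two (by linarith [abs_nonneg t, pi_pos]) hy hty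

theorem abs_integral_sin_pow_le (k : ℕ) {y : ℝ} (hy : |y| ≤ π / 2) :
    |∫ t in (0 : ℝ)..y, sin t ^ k| ≤ |sin y| ^ k * |y| := by
  have hbound : ∀ t ∈ Set.uIoc 0 y, ‖sin t ^ k‖ ≤ |sin y| ^ k := by
    intro t ht
    have hty : |t| ≤ |y| := by
      simpa using Set.abs_sub_left_of_mem_uIcc (Set.uIoc_subset_uIcc ht)
    rw [norm_pow, norm_eq_abs]
    exact pow_le_pow_left₀ (abs_nonneg _) (abs_sin_le_abs_sin hty hy) k
  simpa using intervalIntegral.norm_integral_le_of_norm_le_const hbound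

/-- The closed form of the tail `∑_{m ≥ n}` of the series
`∑ 4 ^ m * sin y ^ (2 * m + 1) / (centralBinom m * (2 * m + 1))`. -/
noncomputable def sinSeriesTail (y : ℝ) (n : ℕ) : ℝ :=
  4 ^ n / (n.centralBinom * cos y) * ∫ t in (0 : ℝ)..y, sin t ^ (2 * n)

theorem sinSeriesTail_sub_sinSeriesTail_succ {y : ℝ} (hy : cos y ≠ 0) (m : ℕ) :
    sinSeriesTail y m - sinSeriesTail y (m + 1) =
      4 ^ m * sin y ^ (2 * m + 1) / (m.centralBinom * (2 * m + 1)) := by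
  have hred : ∫ t in (0 : ℝ)..y, sin t ^ (2 * (m + 1)) =
      ((2 * m + 1) * (∫ t in (0 : ℝ)..y, sin t ^ (2 * m)) - sin y ^ (2 * m + 1) * cos y) /
        (2 * m + 2) := by
    rw [mul_add_one, integral_sin_pow]
    simp only [sin_zero, zero_pow (2 * m).succ_ne_zero]
    push_cast
    ring
  have hc : (m.centralBinom : ℝ) ≠ 0 := by exact_mod_cast m.centralBinom_ne_zero
  simp only [sinSeriesTail, ← div_div, four_pow_div_centralBinom_succ, hred]
  field_simp
  ring

theorem abs_sinSeriesTail_le {y : ℝ} (hy : |y| ≤ π / 2) (n : ℕ) :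
    |sinSeriesTail y n| ≤ (2 * n + 1) * (sin y ^ 2) ^ n * (|y| / cos y) := by
  have hcos : 0 ≤ cos y := cos_nonneg_of_mem_Icc (abs_le.1 hy)
  calc |sinSeriesTail y n|
      = 4 ^ n / n.centralBinom / cos y * |∫ t in (0 : ℝ)..y, sin t ^ (2 * n)| := by
        rw [sinSeriesTail, abs_mul, abs_of_nonneg (by positivity), div_div]
    _ ≤ (2 * n + 1) / cos y * (|sin y| ^ (2 * n) * |y|) := by
        gcongr
        · exact four_pow_div_centralBinom_le n
        · exact abs_integral_sin_pow_le (2 * n) hy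
    _ = (2 * n + 1) * (sin y ^ 2) ^ n * (|y| / cos y) := by
        rw [pow_mul, sq_abs]
        ring

theorem summable_sinSeriesTail {y : ℝ} (hy : |y| < π / 2) : Summable (sinSeriesTail y) := by
  have hcos : 0 < cos y := cos_pos_of_mem_Ioo (abs_lt.1 hy)
  have hsin : ‖sin y ^ 2‖ < 1 := by
    rw [norm_of_nonneg (sq_nonneg _), sin_sq]
    exact sub_lt_self 1 (pow_pos hcos 2)
  have hgeom : Summable fun n : ℕ ↦ (2 * n + 1) * (sin y ^ 2) ^ n := by
    simpa [add_mul, mul_assoc] using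
      ((summable_pow_mul_geometric_of_norm_lt_one 1 hsin).mul_left 2).add
        (summable_geometric_of_norm_lt_one hsin)
  exact (hgeom.mul_right (|y| / cos y)).of_norm_bounded (abs_sinSeriesTail_le hy.le)

theorem hasSum_sinSeriesTail {y : ℝ} (hy : |y| < π / 2) (n : ℕ) :
    HasSum (fun k : ℕ ↦ 4 ^ (n + k) * sin y ^ (2 * (n + k) + 1) /
      ((n + k).centralBinom * (2 * (n + k : ℝ) + 1))) (sinSeriesTail y n) := by
  have hcos : cos y ≠ 0 := (cos_pos_of_mem_Ioo (abs_lt.1 hy)).ne'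
  have hsummable : Summable fun k ↦ sinSeriesTail y (n + k) :=
    (summable_sinSeriesTail hy).comp_injective (add_right_injective n)
  have hterm (k : ℕ) := sinSeriesTail_sub_sinSeriesTail_succ hcos (n + k)
  push_cast at hterm
  simpa only [← add_assoc, hterm, add_zero] using hasSum_sub_succ hsummable

/-- Identity \eqref{equ-V3Use}: for every `n : ℕ` and `-π/2 < y < π/2`,
`∑_{m ≥ n} 4^m (sin y)^{2m+1} / (binom(2m,m)(2m+1))
  = (4^n / (binom(2n,n) cos y)) ∫_0^y (sin t)^{2n} dt`. -/
theorem stmt6 (n : ℕ) (y : ℝ) (hy1 : -(π / 2) < y) (hy2 : y < π / 2) :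
    (∑' k : ℕ, (4 : ℝ) ^ (n + k) * Real.sin y ^ (2 * (n + k) + 1) /
      ((Nat.choose (2 * (n + k)) (n + k) : ℝ) * (2 * (n + k : ℝ) + 1))) =
    ((4 : ℝ) ^ n / ((Nat.choose (2 * n) n : ℝ) * Real.cos y)) *
      ∫ t in (0 : ℝ)..y, Real.sin t ^ (2 * n) := by
  simpa only [sinSeriesTail, Nat.centralBinom_eq_two_mul_choose] using
    (hasSum_sinSeriesTail (abs_lt.2 ⟨hy1, hy2⟩) n).tsum_eq
end

section
/- For every natural number n, we have ∫_0^{1/2} 4 t^{2n+1} / √(1 − 4t²) dt = 1 / (binom(2n, n) · (2n+1)). -/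
open Real

/-!
The substitution `2 * t = cos θ` turns the integral into `(4 ^ n)⁻¹` times the Wallis integral
`∫ θ in 0..π / 2, cos θ ^ (2 * n + 1)`. Wallis' product for the latter telescopes to
`4 ^ n / (centralBinom n * (2 * n + 1))` by the recursion of the central binomial coefficients,
and the two powers of `4` cancel.
-/

theorem integral_inv_sqrt_one_sub_sq_smul_eq_integral_comp_cos
    {E : Type*} [NormedAddCommGroup E] [NormedSpace ℝ E] (f : ℝ → E) {a b : ℝ}
    (ha : a ∈ Set.Icc (-1) 1) (hb : b ∈ Set.Icc (-1) 1) :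
    ∫ t in a..b, (√(1 - t ^ 2))⁻¹ • f t = ∫ θ in arccos b..arccos a, f (cos θ) := by
  have hasDerivAt_arccos_of_mem : ∀ t ∈ Set.Ioo (min a b) (max a b),
      HasDerivAt arccos (-(√(1 - t ^ 2))⁻¹) t := fun t ht ↦ by
    have neg_one_lt : -1 < t := (le_min ha.1 hb.1).trans_lt ht.1
    have lt_one : t < 1 := ht.2.trans_le (max_le ha.2 hb.2)
    simpa only [one_div] using hasDerivAt_arccos neg_one_lt.ne' lt_one.ne
  have cos_arccos_of_mem : ∀ t ∈ Set.uIcc a b, cos (arccos t) = t := fun t ht ↦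
    have ht' := Set.uIcc_subset_Icc ha hb ht
    cos_arccos ht'.1 ht'.2
  calc ∫ t in a..b, (√(1 - t ^ 2))⁻¹ • f t
      = -∫ t in a..b, -(√(1 - t ^ 2))⁻¹ • f (cos (arccos t)) := by
        rw [← intervalIntegral.integral_neg]
        refine intervalIntegral.integral_congr fun t ht ↦ ?_
        simp only [neg_smul, neg_neg, cos_arccos_of_mem t ht]
    _ = -∫ θ in arccos a..arccos b, f (cos θ) :=
        congrArg _ <| intervalIntegral.integral_deriv_smul_comp_of_deriv_nonpos
          (g := fun θ ↦ f (cos θ)) continuous_arccos.continuousOn hasDerivAt_arccos_of_mem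
          fun t _ ↦ neg_nonpos.2 (by positivity)
    _ = ∫ θ in arccos b..arccos a, f (cos θ) := (intervalIntegral.integral_symm _ _).symm

theorem integral_zero_one_pow_div_sqrt_one_sub_sq (m : ℕ) :
    ∫ t in (0 : ℝ)..1, t ^ m / √(1 - t ^ 2) = ∫ θ in 0..π / 2, cos θ ^ m := by
  simpa only [smul_eq_mul, inv_mul_eq_div, arccos_zero, arccos_one] using
    integral_inv_sqrt_one_sub_sq_smul_eq_integral_comp_cos (· ^ m)
      (a := 0) (b := 1) (by norm_num) (by norm_num)

theorem integral_pow_div_sqrt_one_sub_mul_sq {c : ℝ} (hc : c ≠ 0) (m : ℕ) (a b : ℝ) :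
    ∫ t in a..b, t ^ m / √(1 - (c * t) ^ 2) =
      (∫ x in c * a..c * b, x ^ m / √(1 - x ^ 2)) / c ^ (m + 1) := by
  rw [eq_div_iff (pow_ne_zero _ hc), ← intervalIntegral.mul_integral_comp_mul_left,
    ← intervalIntegral.integral_mul_const, ← intervalIntegral.integral_const_mul]
  refine intervalIntegral.integral_congr fun t _ ↦ ?_
  ring

theorem prod_range_even_div_odd_eq_four_pow_div_centralBinom
    {K : Type*} [Field K] [CharZero K] (n : ℕ) :
    ∏ i ∈ Finset.range n, ((2 * i + 2) / (2 * i + 3) : K) =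
      4 ^ n / (n.centralBinom * (2 * n + 1)) := by
  induction n with
  | zero => simp
  | succ n ih =>
    have centralBinom_recursion :
        (n + 1 : K) * (n + 1).centralBinom = 2 * (2 * n + 1) * n.centralBinom :=
      mod_cast Nat.succ_mul_centralBinom_succ n
    have centralBinom_ne_zero (k : ℕ) : (k.centralBinom : K) ≠ 0 := mod_cast k.centralBinom_ne_zero
    have two_mul_add_one_ne_zero : (2 * n + 1 : K) ≠ 0 := mod_cast (2 * n).succ_ne_zero
    have two_mul_add_three_ne_zero : (2 * n + 3 : K) ≠ 0 := mod_cast (2 * n + 2).succ_ne_zero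
    rw [Finset.prod_range_succ, ih, div_mul_div_comm, Nat.cast_succ,
      show (2 * (n + 1) + 1 : K) = 2 * n + 3 by ring, div_eq_div_iff (by simp [*]) (by simp [*])]
    linear_combination 2 * 4 ^ n * (2 * n + 3) * centralBinom_recursion

theorem integral_cos_pow_odd_eq_four_pow_div_centralBinom (n : ℕ) :
    ∫ θ in 0..π / 2, cos θ ^ (2 * n + 1) = 4 ^ n / (n.centralBinom * (2 * n + 1)) := by
  rw [EulerSine.integral_cos_pow_eq, integral_sin_pow_odd, one_div,
    inv_mul_cancel_left₀ two_ne_zero, prod_range_even_div_odd_eq_four_pow_div_centralBinom]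

/-- For every `n : ℕ`, `∫_0^{1/2} 4 t^{2n+1} / √(1 − 4t²) dt = 1/(binom(2n,n)(2n+1))`. -/
theorem stmt7 (n : ℕ) :
    (∫ t in (0 : ℝ)..(1 / 2 : ℝ), 4 * t ^ (2 * n + 1) / Real.sqrt (1 - 4 * t ^ 2)) =
    1 / ((Nat.choose (2 * n) n : ℝ) * (2 * (n : ℝ) + 1)) := by
  have integrand_eq (t : ℝ) : 4 * t ^ (2 * n + 1) / √(1 - 4 * t ^ 2) =
      4 * (t ^ (2 * n + 1) / √(1 - (2 * t) ^ 2)) := by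
    rw [mul_div_assoc, mul_pow]
    norm_num
  have two_pow : (2 : ℝ) ^ (2 * n + 1 + 1) = 4 * 4 ^ n := by
    rw [← pow_succ', show 2 * n + 1 + 1 = 2 * (n + 1) by ring, pow_mul]
    norm_num
  calc ∫ t in (0 : ℝ)..1 / 2, 4 * t ^ (2 * n + 1) / √(1 - 4 * t ^ 2)
      = 4 * ∫ t in (0 : ℝ)..1 / 2, t ^ (2 * n + 1) / √(1 - (2 * t) ^ 2) := by
        simp only [integrand_eq, intervalIntegral.integral_const_mul]
    _ = 4 * ((∫ x in (0 : ℝ)..1, x ^ (2 * n + 1) / √(1 - x ^ 2)) / (4 * 4 ^ n)) := by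
        rw [integral_pow_div_sqrt_one_sub_mul_sq two_ne_zero, two_pow, mul_zero,
          mul_one_div_cancel two_ne_zero]
    _ = 4 * (4 ^ n / (n.centralBinom * (2 * n + 1)) / (4 * 4 ^ n)) := by
        rw [integral_zero_one_pow_div_sqrt_one_sub_sq,
          integral_cos_pow_odd_eq_four_pow_div_centralBinom]
    _ = 1 / (Nat.choose (2 * n) n * (2 * n + 1)) := by
        rw [Nat.centralBinom_eq_two_mul_choose]
        field_simp
end

section
/- We have ∑_{n=0}^∞ 4^n / (binom(2n, n) · (2n+1)²) = 2G, where G = ∑_{k=0}^∞ (−1)^k/(2k+1)² is Catalan's constant. -/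
open Real

/-!
Let `wₙ = 4ⁿ / ((2n+1) binom(2n,n))`. The recurrence `(2n+3) wₙ₊₁ = (2n+2) wₙ` says that
`A(x) = ∑ wₙ x²ⁿ⁺¹` solves `(1 - x²) A' = 1 + x A`, i.e. that `cos θ · A(sin θ)` has derivative `1`;
hence `cos θ · A(sin θ) = θ`. Since `∑ cₙ/(2n+1) x²ⁿ⁺¹` has derivative `x⁻¹ ∑ cₙ x²ⁿ⁺¹`, both
`∑ wₙ/(2n+1) sin(2φ)²ⁿ⁺¹` and `2 ∑ (-1)ⁿ/(2n+1)² tan(φ)²ⁿ⁺¹` have derivative `4φ / sin(2φ)`, so they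
agree. Both are continuous up to `φ = π/4`, where they are the two sides of the theorem.
-/

lemma norm_two_mul_natCast_add_one {𝕜 : Type*} [RCLike 𝕜] (n : ℕ) :
    ‖(2 * n + 1 : 𝕜)‖ = 2 * n + 1 := by
  exact_mod_cast RCLike.norm_natCast (K := 𝕜) (2 * n + 1)

/-- The sum of the odd power series `∑ c n * x ^ (2 * n + 1)`, with the junk value `0` where the
series does not converge. -/
noncomputable def oddSeries {𝕜 : Type*} [RCLike 𝕜] (c : ℕ → 𝕜) (x : 𝕜) : 𝕜 :=
  ∑' n, c n * x ^ (2 * n + 1)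

namespace oddSeries

variable {𝕜 : Type*} [RCLike 𝕜] {c : ℕ → 𝕜} {C : ℝ} {x : 𝕜}

@[simp]
lemma apply_zero (c : ℕ → 𝕜) : oddSeries c 0 = 0 := by simp [oddSeries]

@[simp]
lemma apply_one (c : ℕ → 𝕜) : oddSeries c 1 = ∑' n, c n := by simp [oddSeries]

lemma summable (hc : ∀ n, ‖c n‖ ≤ C) (hx : ‖x‖ < 1) :
    Summable fun n ↦ c n * x ^ (2 * n + 1) := by
  have hgeom : Summable fun n : ℕ ↦ ‖x‖ ^ (2 * n + 1) :=
    (summable_geometric_of_lt_one (norm_nonneg x) hx).comp_injective fun m n h ↦ by lia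
  refine .of_norm_bounded (hgeom.mul_left C) fun n ↦ ?_
  rw [norm_mul, norm_pow]
  gcongr
  exact hc n

lemma summable_deriv_bound {r : ℝ} (hr : |r| < 1) (C : ℝ) :
    Summable fun n : ℕ ↦ (2 * n + 1) * C * r ^ (2 * n) := by
  have hr2 : ‖r ^ 2‖ < 1 := by rw [norm_pow]; exact pow_lt_one₀ (norm_nonneg r) hr two_ne_zero
  have hlin : Summable fun n : ℕ ↦ (n : ℝ) * (r ^ 2) ^ n := by
    simpa only [pow_one] using summable_pow_mul_geometric_of_norm_lt_one 1 hr2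
  refine ((hlin.mul_left (2 * C)).add
    ((summable_geometric_of_norm_lt_one hr2).mul_left C)).congr fun n ↦ ?_
  rw [pow_mul]
  ring

lemma norm_deriv_term_le (hc : ∀ n, ‖c n‖ ≤ C) {r : ℝ} (hx : ‖x‖ ≤ r) (n : ℕ) :
    ‖(2 * n + 1) * c n * x ^ (2 * n)‖ ≤ (2 * n + 1) * C * r ^ (2 * n) := by
  have hC : 0 ≤ C := (norm_nonneg _).trans (hc 0)
  rw [norm_mul, norm_mul, norm_pow, norm_two_mul_natCast_add_one]
  gcongr
  exact hc n

lemma summable_deriv (hc : ∀ n, ‖c n‖ ≤ C) (hx : ‖x‖ < 1) :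
    Summable fun n : ℕ ↦ (2 * n + 1) * c n * x ^ (2 * n) :=
  .of_norm_bounded (summable_deriv_bound (by rwa [abs_norm]) C) (norm_deriv_term_le hc le_rfl)

protected lemma hasDerivAt (hc : ∀ n, ‖c n‖ ≤ C) (hx : ‖x‖ < 1) :
    HasDerivAt (oddSeries c) (∑' n : ℕ, (2 * n + 1) * c n * x ^ (2 * n)) x := by
  obtain ⟨r, hxr, hr⟩ := exists_between hx
  have hr0 : 0 < r := (norm_nonneg x).trans_lt hxr
  refine hasDerivAt_tsum_of_isPreconnected (t := Metric.ball 0 r) (y₀ := 0)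
    (g := fun n y ↦ c n * y ^ (2 * n + 1))
    (summable_deriv_bound (by rwa [abs_of_pos hr0]) C) Metric.isOpen_ball
    (convex_ball 0 r).isPreconnected (fun n y _ ↦ ?_)
    (fun n y hy ↦ norm_deriv_term_le hc (mem_ball_zero_iff.1 hy).le n)
    (Metric.mem_ball_self hr0) (by simp) (mem_ball_zero_iff.2 hxr)
  refine ((hasDerivAt_pow (2 * n + 1) y).const_mul (c n)).congr_deriv ?_
  push_cast [Nat.add_sub_cancel]
  ring

lemma hasDerivAt_div (hc : ∀ n, ‖c n‖ ≤ C) (hx0 : x ≠ 0) (hx : ‖x‖ < 1) :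
    HasDerivAt (oddSeries fun n ↦ c n / (2 * n + 1)) (oddSeries c x / x) x := by
  have hne (n : ℕ) : (2 * n + 1 : 𝕜) ≠ 0 := by exact_mod_cast (2 * n).succ_ne_zero
  have hbound (n : ℕ) : ‖c n / (2 * n + 1)‖ ≤ C := by
    rw [norm_div, norm_two_mul_natCast_add_one]
    exact (div_le_self (norm_nonneg _) (by linarith [n.cast_nonneg (α := ℝ)])).trans (hc n)
  refine (oddSeries.hasDerivAt hbound hx).congr_deriv ?_
  rw [oddSeries, ← tsum_div_const]
  refine tsum_congr fun n ↦ ?_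
  rw [mul_div_cancel₀ _ (hne n), pow_succ, ← mul_assoc, mul_div_cancel_right₀ _ hx0]

protected lemma continuousOn (hc : Summable fun n ↦ ‖c n‖) :
    ContinuousOn (oddSeries c) (Metric.closedBall 0 1) := by
  refine continuousOn_tsum (fun n ↦ by fun_prop) hc fun n x hx ↦ ?_
  rw [norm_mul, norm_pow]
  exact mul_le_of_le_one_right (norm_nonneg _)
    (pow_le_one₀ (norm_nonneg x) (mem_closedBall_zero_iff.1 hx))

end oddSeries

/-- The odd Wallis ratio `4ⁿ / ((2n+1) binom(2n,n)) = (2/3)(4/5)⋯(2n/(2n+1))`, the coefficient of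
`x ^ (2 * n + 1)` in `arcsin x / √(1 - x²)`. -/
noncomputable def oddWallis (n : ℕ) : ℝ := 4 ^ n / ((2 * n + 1) * n.centralBinom)

namespace oddWallis

@[simp]
protected lemma zero : oddWallis 0 = 1 := by simp [oddWallis]

protected lemma nonneg (n : ℕ) : 0 ≤ oddWallis n := by unfold oddWallis; positivity

lemma succ_recurrence (n : ℕ) : (2 * n + 3) * oddWallis (n + 1) = (2 * n + 2) * oddWallis n := by
  have hrec : ((n : ℝ) + 1) * (n + 1).centralBinom = 2 * (2 * n + 1) * n.centralBinom := by
    exact_mod_cast n.succ_mul_centralBinom_succ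
  have hn : (n.centralBinom : ℝ) ≠ 0 := by exact_mod_cast n.centralBinom_ne_zero
  have hn' : ((n + 1).centralBinom : ℝ) ≠ 0 := by exact_mod_cast (n + 1).centralBinom_ne_zero
  have h3 : 2 * ((n : ℝ) + 1) + 1 ≠ 0 := by positivity
  unfold oddWallis
  push_cast
  field_simp
  linear_combination (-2 * (2 * n + 3) * 4 ^ n : ℝ) * hrec

lemma sub_succ (n : ℕ) : oddWallis n - oddWallis (n + 1) = oddWallis n / (2 * n + 3) := by
  rw [eq_div_iff (by positivity)]
  linear_combination -succ_recurrence n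

protected lemma antitone : Antitone oddWallis :=
  antitone_nat_of_succ_le fun n ↦ sub_nonneg.1 <| by
    rw [sub_succ]
    exact div_nonneg (oddWallis.nonneg n) (by positivity)

lemma norm_le_one (n : ℕ) : ‖oddWallis n‖ ≤ 1 := by
  rw [norm_of_nonneg (oddWallis.nonneg n), ← oddWallis.zero]
  exact oddWallis.antitone n.zero_le

-- The series is dominated termwise by the telescoping series `∑ 3 (wₙ - wₙ₊₁)`.
lemma summable_div : Summable fun n ↦ oddWallis n / (2 * n + 1) := by
  refine summable_of_sum_range_le (c := 3)
    (fun n ↦ div_nonneg (oddWallis.nonneg n) (by positivity)) fun N ↦ ?_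
  have hterm (n : ℕ) : oddWallis n / (2 * n + 1) ≤ 3 * (oddWallis n - oddWallis (n + 1)) := by
    rw [sub_succ, mul_div_assoc', div_le_div_iff₀ (by positivity) (by positivity)]
    nlinarith [mul_nonneg (oddWallis.nonneg n) n.cast_nonneg]
  calc ∑ n ∈ Finset.range N, oddWallis n / (2 * n + 1)
      ≤ ∑ n ∈ Finset.range N, 3 * (oddWallis n - oddWallis (n + 1)) :=
        Finset.sum_le_sum fun n _ ↦ hterm n
    _ = 3 * (1 - oddWallis N) := by
        rw [← Finset.mul_sum, Finset.sum_range_sub', oddWallis.zero]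
    _ ≤ 3 := by linarith [oddWallis.nonneg N]

lemma one_sub_sq_mul_tsum_deriv {x : ℝ} (hx : |x| < 1) :
    (1 - x ^ 2) * ∑' n : ℕ, (2 * n + 1) * oddWallis n * x ^ (2 * n) =
      1 + x * oddSeries oddWallis x := by
  have hS := oddSeries.summable norm_le_one hx
  have hD := oddSeries.summable_deriv norm_le_one hx
  have hshift : ∑' n : ℕ, (2 * ((n + 1 : ℕ) : ℝ) + 1) * oddWallis (n + 1) * x ^ (2 * (n + 1)) =
      x ^ 2 * (∑' n : ℕ, (2 * n + 1) * oddWallis n * x ^ (2 * n)) + x * oddSeries oddWallis x := by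
    rw [oddSeries, ← tsum_mul_left, ← tsum_mul_left,
      ← (hD.mul_left _).tsum_add (hS.mul_left _)]
    refine tsum_congr fun n ↦ ?_
    push_cast
    linear_combination x ^ (2 * n + 2) * succ_recurrence n
  have hsplit := hD.tsum_eq_zero_add
  rw [hshift] at hsplit
  simp only [oddWallis.zero, Nat.cast_zero, mul_zero, pow_zero] at hsplit
  linear_combination hsplit

end oddWallis

lemma abs_sin_lt_one_of_cos_ne_zero {θ : ℝ} (hθ : cos θ ≠ 0) : |sin θ| < 1 := by
  rw [← sq_lt_one_iff_abs_lt_one, sin_sq]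
  linarith [pow_pos (abs_pos.2 hθ) 2, sq_abs (cos θ)]

lemma cos_mul_oddSeries_oddWallis_sin {θ : ℝ} (hθ : |θ| < π / 2) :
    cos θ * oddSeries oddWallis (sin θ) = θ := by
  have hderiv (t : ℝ) (ht : t ∈ Set.Ioo (-(π / 2)) (π / 2)) :
      HasDerivAt (fun t ↦ cos t * oddSeries oddWallis (sin t)) 1 t := by
    have hsin : |sin t| < 1 := abs_sin_lt_one_of_cos_ne_zero (cos_pos_of_mem_Ioo ht).ne'
    have hA := (oddSeries.hasDerivAt oddWallis.norm_le_one hsin).comp t (hasDerivAt_sin t)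
    refine ((hasDerivAt_cos t).mul hA).congr_deriv ?_
    have hode := oddWallis.one_sub_sq_mul_tsum_deriv hsin
    rw [← cos_sq'] at hode
    simp only [Function.comp_apply]
    linear_combination hode
  refine isOpen_Ioo.eqOn_of_deriv_eq (g := id) isPreconnected_Ioo
    (fun t ht ↦ (hderiv t ht).differentiableAt.differentiableWithinAt) differentiableOn_id
    (fun t ht ↦ by rw [(hderiv t ht).deriv, deriv_id]) (x := 0) ?_ (by simp) (abs_lt.1 hθ)
  simp [pi_pos]

/-- The coefficient `(-1)ⁿ / (2n+1)` of `x ^ (2 * n + 1)` in the Taylor series of `arctan`. -/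
noncomputable def arctanCoeff (n : ℕ) : ℝ := (-1) ^ n / (2 * n + 1)

namespace arctanCoeff

lemma norm_eq (n : ℕ) : ‖arctanCoeff n‖ = 1 / (2 * n + 1) := by
  rw [arctanCoeff, norm_div, norm_pow, norm_neg, norm_one, one_pow, norm_of_nonneg (by positivity)]

lemma norm_le_one (n : ℕ) : ‖arctanCoeff n‖ ≤ 1 := by
  rw [norm_eq]
  exact div_le_one_of_le₀ (by linarith [n.cast_nonneg (α := ℝ)]) (by positivity)

lemma summable_norm_div : Summable fun n ↦ ‖arctanCoeff n / (2 * n + 1)‖ := by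
  have hsq : Summable fun n : ℕ ↦ 1 / ((2 * n + 1 : ℕ) : ℝ) ^ 2 :=
    (summable_one_div_nat_pow.2 one_lt_two).comp_injective
      (i := fun n : ℕ ↦ 2 * n + 1) fun m n h ↦ by simpa using h
  refine hsq.congr fun n ↦ ?_
  rw [norm_div, norm_eq, norm_of_nonneg (by positivity), div_div, ← sq]
  push_cast
  rfl

end arctanCoeff

lemma oddSeries_arctanCoeff {x : ℝ} (hx : |x| < 1) : oddSeries arctanCoeff x = arctan x := by
  rw [oddSeries, ← (hasSum_arctan hx).tsum_eq]
  refine tsum_congr fun n ↦ ?_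
  rw [arctanCoeff, div_mul_eq_mul_div]
  push_cast
  rfl

lemma abs_tan_lt_one_s8 {φ : ℝ} (hφ : |φ| < π / 4) : |tan φ| < 1 := by
  obtain ⟨hl, hr⟩ := abs_lt.1 hφ
  have hmem : φ ∈ Set.Ioo (-(π / 2)) (π / 2) := ⟨by linarith, by linarith⟩
  rw [abs_lt, ← tan_pi_div_four, ← tan_neg]
  exact ⟨strictMonoOn_tan ⟨by linarith, by linarith⟩ hmem hl,
    strictMonoOn_tan hmem ⟨by linarith, by linarith⟩ hr⟩

lemma abs_tan_le_one_s8 {φ : ℝ} (hφ : |φ| ≤ π / 4) : |tan φ| ≤ 1 := by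
  rcases hφ.lt_or_eq with hlt | heq
  · exact (abs_tan_lt_one_s8 hlt).le
  · rcases eq_or_eq_neg_of_abs_eq heq with rfl | rfl <;> simp

lemma hasDerivAt_oddSeries_oddWallis_div_sin {φ : ℝ} (h0 : φ ≠ 0) (hφ : |φ| < π / 4) :
    HasDerivAt (fun φ ↦ oddSeries (fun n ↦ oddWallis n / (2 * n + 1)) (sin (2 * φ)))
      (4 * φ / sin (2 * φ)) φ := by
  have h2φ : |2 * φ| < π / 2 := by rw [abs_mul, abs_two]; linarith
  obtain ⟨hl, hr⟩ := abs_lt.1 h2φ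
  have hcos : cos (2 * φ) ≠ 0 := (cos_pos_of_mem_Ioo ⟨hl, hr⟩).ne'
  have hsin : sin (2 * φ) ≠ 0 :=
    (sin_eq_zero_iff_of_lt_of_lt (by linarith [pi_pos]) (by linarith [pi_pos])).not.2 (by simpa)
  have hs : HasDerivAt (fun φ ↦ sin (2 * φ)) (cos (2 * φ) * 2) φ := by
    simpa using ((hasDerivAt_id φ).const_mul 2).sin
  refine ((oddSeries.hasDerivAt_div oddWallis.norm_le_one hsin
    (abs_sin_lt_one_of_cos_ne_zero hcos)).comp φ hs).congr_deriv ?_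
  field_simp
  linear_combination 2 * cos_mul_oddSeries_oddWallis_sin h2φ

lemma hasDerivAt_oddSeries_arctanCoeff_div_tan {φ : ℝ} (h0 : φ ≠ 0) (hφ : |φ| < π / 4) :
    HasDerivAt (fun φ ↦ oddSeries (fun n ↦ arctanCoeff n / (2 * n + 1)) (tan φ))
      (2 * φ / sin (2 * φ)) φ := by
  obtain ⟨hl, hr⟩ := abs_lt.1 hφ
  have hcos : cos φ ≠ 0 := (cos_pos_of_mem_Ioo ⟨by linarith, by linarith⟩).ne'
  have hsin : sin φ ≠ 0 := (sin_eq_zero_iff_of_lt_of_lt (by linarith) (by linarith)).not.2 h0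
  have htan : tan φ ≠ 0 := by rw [tan_eq_sin_div_cos]; exact div_ne_zero hsin hcos
  refine ((oddSeries.hasDerivAt_div arctanCoeff.norm_le_one htan
    (abs_tan_lt_one_s8 hφ)).comp φ (hasDerivAt_tan hcos)).congr_deriv ?_
  rw [oddSeries_arctanCoeff (abs_tan_lt_one_s8 hφ), arctan_tan (by linarith) (by linarith),
    sin_two_mul, tan_eq_sin_div_cos]
  field_simp

lemma continuous_oddSeries_oddWallis_div_sin :
    Continuous fun φ ↦ oddSeries (fun n ↦ oddWallis n / (2 * n + 1)) (sin (2 * φ)) :=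
  (oddSeries.continuousOn oddWallis.summable_div.norm).comp_continuous (by fun_prop)
    fun _ ↦ mem_closedBall_zero_iff.2 (abs_sin_le_one _)

lemma continuousOn_oddSeries_arctanCoeff_div_tan :
    ContinuousOn (fun φ ↦ oddSeries (fun n ↦ arctanCoeff n / (2 * n + 1)) (tan φ))
      (Set.Icc (-(π / 4)) (π / 4)) := by
  refine (oddSeries.continuousOn arctanCoeff.summable_norm_div).comp
    (continuousOn_tan_Ioo.mono fun φ hφ ↦ ?_)
    fun φ hφ ↦ mem_closedBall_zero_iff.2 (abs_tan_le_one_s8 (abs_le.2 hφ))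
  exact ⟨by linarith [pi_pos, hφ.1], by linarith [pi_pos, hφ.2]⟩

lemma ne_zero_and_abs_lt_abs_of_mem_Ioo_min_max {a t : ℝ}
    (ht : t ∈ Set.Ioo (min 0 a) (max 0 a)) : t ≠ 0 ∧ |t| < |a| := by
  rcases le_total 0 a with ha | ha
  · rw [min_eq_left ha, max_eq_right ha] at ht
    exact ⟨ht.1.ne', by rw [abs_of_pos ht.1, abs_of_nonneg ha]; exact ht.2⟩
  · rw [min_eq_right ha, max_eq_left ha] at ht
    exact ⟨ht.2.ne, by rw [abs_of_neg ht.2, abs_of_nonpos ha]; exact neg_lt_neg ht.1⟩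

lemma oddSeries_oddWallis_div_sin_two_mul {φ : ℝ} (hφ : |φ| ≤ π / 4) :
    oddSeries (fun n ↦ oddWallis n / (2 * n + 1)) (sin (2 * φ)) =
      2 * oddSeries (fun n ↦ arctanCoeff n / (2 * n + 1)) (tan φ) := by
  set f : ℝ → ℝ := fun φ ↦ oddSeries (fun n ↦ oddWallis n / (2 * n + 1)) (sin (2 * φ)) -
    2 * oddSeries (fun n ↦ arctanCoeff n / (2 * n + 1)) (tan φ) with hf
  have hsub : Set.uIcc 0 φ ⊆ Set.Icc (-(π / 4)) (π / 4) :=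
    Set.uIcc_subset_Icc ⟨by linarith [pi_pos], by positivity⟩ (abs_le.1 hφ)
  have hcont : ContinuousOn f (Set.uIcc 0 φ) :=
    continuous_oddSeries_oddWallis_div_sin.continuousOn.sub
      ((continuousOn_oddSeries_arctanCoeff_div_tan.const_mul 2).mono hsub)
  have hderiv (t : ℝ) (ht : t ∈ Set.Ioo (min 0 φ) (max 0 φ)) : HasDerivAt f 0 t := by
    obtain ⟨ht0, htφ⟩ := ne_zero_and_abs_lt_abs_of_mem_Ioo_min_max ht
    have ht4 : |t| < π / 4 := htφ.trans_le hφ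
    refine ((hasDerivAt_oddSeries_oddWallis_div_sin ht0 ht4).sub
      ((hasDerivAt_oddSeries_arctanCoeff_div_tan ht0 ht4).const_mul 2)).congr_deriv ?_
    ring
  have hconst := intervalIntegral.integral_eq_sub_of_hasDeriv_right hcont
    (fun t ht ↦ (hderiv t ht).hasDerivWithinAt) intervalIntegrable_const
  simpa [hf, sub_eq_zero] using hconst.symm

/-- `∑_{n≥0} 4^n / (binom(2n,n) (2n+1)²) = 2G`, `G` Catalan's constant. -/
theorem stmt8 :
    (∑' n : ℕ, (4 : ℝ) ^ n / ((Nat.choose (2 * n) n : ℝ) * (2 * (n : ℝ) + 1) ^ 2)) =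
    2 * ∑' k : ℕ, (-1 : ℝ) ^ k / (2 * (k : ℝ) + 1) ^ 2 := by
  have h := oddSeries_oddWallis_div_sin_two_mul (φ := π / 4) (abs_of_pos (by positivity)).le
  rw [show 2 * (π / 4) = π / 2 by ring, sin_pi_div_two, tan_pi_div_four, oddSeries.apply_one,
    oddSeries.apply_one] at h
  calc ∑' n : ℕ, (4 : ℝ) ^ n / ((Nat.choose (2 * n) n : ℝ) * (2 * (n : ℝ) + 1) ^ 2)
      = ∑' n : ℕ, oddWallis n / (2 * n + 1) := tsum_congr fun n ↦ by
        rw [oddWallis, Nat.centralBinom, div_div]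
        ring
    _ = 2 * ∑' k : ℕ, arctanCoeff k / (2 * k + 1) := h
    _ = 2 * ∑' k : ℕ, (-1 : ℝ) ^ k / (2 * (k : ℝ) + 1) ^ 2 := by
        simp only [arctanCoeff, div_div, sq]
end
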